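/- Let u₀ ∈ Ż_{5,4} with ∫_ℝ x u₀(x) dx ≠ 0, and let W(t)u₀ denote the solution of the linear IVP ∂ₜu + 𝓗∂ₓ²u = 0, u(x,0) = u₀(x), given on the Fourier side by (W(t)u₀)^(ξ) = e^{−it|ξ|ξ} û₀(ξ). Then for every t ≠ 0, W(t)u₀ ∈ L²(|x|^{7−ε} dx) for every ε ∈ (0,7], but W(t)u₀ ∉ L²(|x|⁷ dx). -/

import Mathlib

open MeasureTheory Real Complex Filter
open scoped FourierTransform ENNReal

noncomputable section

/-- The Hilbert transform on ℝ, defined via the Fourier transform: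
`(𝓗 f)^(ξ) = -i sgn(ξ) f̂(ξ)`. -/
def hilbertT (f : ℝ → ℂ) : ℝ → ℂ :=
  𝓕⁻ (fun ξ : ℝ => (-Complex.I) * (Real.sign ξ : ℂ) * 𝓕 f ξ)

/-- A real-valued solution of the Benjamin–Ono equation
`∂ₜ u + 𝓗 ∂ₓ² u + u ∂ₓ u = 0`, where `u t x` is the value at time `t`, position `x`. -/
def IsBOSolution (u : ℝ → ℝ → ℝ) : Prop :=
  ∀ t x : ℝ,
    (deriv (fun τ => u τ x) t : ℂ)
      + hilbertT (fun y => (iteratedDeriv 2 (fun z => u t z) y : ℂ)) x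
      + (u t x : ℂ) * (deriv (fun y => u t y) x : ℂ) = 0

/-- The (extended-real) `H^s(ℝ)` Sobolev norm of a function. -/
def hsNorm (s : ℝ) (f : ℝ → ℂ) : ℝ≥0∞ :=
  eLpNorm (fun ξ : ℝ => ((1 + ξ ^ 2) ^ (s / 2) : ℝ) * 𝓕 f ξ) 2 volume

/-- The (extended-real) norm of `f` in `L²(|x|^{2r} dx)`. -/
def wNorm (r : ℝ) (f : ℝ → ℂ) : ℝ≥0∞ :=
  eLpNorm (fun x : ℝ => (|x| ^ r : ℝ) * f x) 2 volume

/-- The norm of the weighted Sobolev space `Z_{s,r} = H^s(ℝ) ∩ L²(|x|^{2r} dx)`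
(it also controls the `L²` norm). -/
def zNorm (s r : ℝ) (f : ℝ → ℂ) : ℝ≥0∞ :=
  hsNorm s f + wNorm r f + eLpNorm f 2 volume

/-- Membership in `Z_{s,r} = H^s(ℝ) ∩ L²(|x|^{2r} dx)` for a real-valued function. -/
def InZ (s r : ℝ) (f : ℝ → ℝ) : Prop :=
  AEStronglyMeasurable f volume ∧ zNorm s r (fun x => (f x : ℂ)) < ⊤

/-- Membership in `Ż_{s,r} = {f ∈ Z_{s,r} : f̂(0) = 0}` for a real-valued function. -/
def InZdot (s r : ℝ) (f : ℝ → ℝ) : Prop :=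
  InZ s r f ∧ 𝓕 (fun x => (f x : ℂ)) 0 = 0

/-- `u ∈ C(ℝ : Z_{s,r})`: membership for all times plus continuity in the `Z_{s,r}` norm. -/
def ContZ (s r : ℝ) (u : ℝ → ℝ → ℝ) : Prop :=
  (∀ t, InZ s r (u t)) ∧
    ∀ t₀ : ℝ, Tendsto (fun t => zNorm s r (fun x => ((u t x : ℂ) - (u t₀ x : ℂ)))) (nhds t₀)
      (nhds 0)

/-- `u ∈ C(ℝ : Ż_{s,r})`. -/
def ContZdot (s r : ℝ) (u : ℝ → ℝ → ℝ) : Prop :=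
  ContZ s r u ∧ ∀ t, 𝓕 (fun x => (u t x : ℂ)) 0 = 0

end

/-- The solution `W(t)u₀` of the linear Benjamin–Ono equation
`∂ₜu + 𝓗∂ₓ²u = 0`, given on the Fourier side by `(W(t)u₀)^(ξ) = e^{-it|ξ|ξ} û₀(ξ)`. -/
noncomputable def linBO (t : ℝ) (u₀ : ℝ → ℝ) : ℝ → ℂ :=
  𝓕⁻ (fun ξ : ℝ => Complex.exp (-Complex.I * t * |ξ| * ξ) * 𝓕 (fun x => (u₀ x : ℂ)) ξ)


section ACpart
open Set intervalIntegral

/-- `f` is locally absolutely continuous with a.e. derivative `f'` (in the FTC form). -/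
def IsAC (f f' : ℝ → ℂ) : Prop :=
  LocallyIntegrable f' volume ∧ ∀ a b : ℝ, ∫ x in a..b, f' x = f b - f a

theorem locInt_ii {f : ℝ → ℂ} (hf : LocallyIntegrable f volume) (x y : ℝ) :
    IntervalIntegrable f volume x y :=
  intervalIntegrable_iff.mpr <|
      (hf.integrableOn_isCompact isCompact_uIcc).mono_set uIoc_subset_uIcc

theorem ac_ofReal {f : ℝ → ℝ} {a b : ℝ} (h : AbsolutelyContinuousOnInterval f a b) :
    AbsolutelyContinuousOnInterval (fun x => ((f x : ℝ) : ℂ)) a b := by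
  simp only [AbsolutelyContinuousOnInterval] at *
  convert h using 4
  simp [dist_eq_norm, ← Complex.ofReal_sub, Complex.norm_real]

theorem ac_integral {f : ℝ → ℂ} (hf : LocallyIntegrable f volume) (a b : ℝ) :
    AbsolutelyContinuousOnInterval (fun x => ∫ v in a..x, f v) a b := by
  have hii := fun x y => locInt_ii hf x y
  have hre : ∀ x y, IntervalIntegrable (fun x => (f x).re) volume x y := fun x y =>
    ⟨(hii x y).1.re, (hii x y).2.re⟩
  have him : ∀ x y, IntervalIntegrable (fun x => (f x).im) volume x y := fun x y =>
    ⟨(hii x y).1.im, (hii x y).2.im⟩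
  have h1 := ac_ofReal ((hre a b).absolutelyContinuousOnInterval_intervalIntegral (c := a) (by simp))
  have h2 := ac_ofReal ((him a b).absolutelyContinuousOnInterval_intervalIntegral (c := a) (by simp))
  have h3 := h1.add (h2.const_smul Complex.I)
  refine (congrArg (fun F => AbsolutelyContinuousOnInterval F a b) ?_).mpr h3
  funext x
  simp only [Pi.add_apply, smul_eq_mul]
  rw [← intervalIntegral.integral_ofReal, ← intervalIntegral.integral_ofReal,
    ← intervalIntegral.integral_const_mul, ← intervalIntegral.integral_add]
  · congr 1; ext y; rw [mul_comm]; exact (Complex.re_add_im (f y)).symm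
  · exact ⟨(hre a x).1.ofReal, (hre a x).2.ofReal⟩
  · exact IntervalIntegrable.const_mul ⟨(him a x).1.ofReal, (him a x).2.ofReal⟩ _

theorem IsAC.ac {f f' : ℝ → ℂ} (h : IsAC f f') (a b : ℝ) :
    AbsolutelyContinuousOnInterval f a b := by
  have h1 := ac_integral h.1 a b
  have h2 : AbsolutelyContinuousOnInterval (fun _ : ℝ => f a) a b := by
    simp only [AbsolutelyContinuousOnInterval, dist_self, Finset.sum_const_zero]
    exact tendsto_const_nhds
  refine (congrArg (fun F => AbsolutelyContinuousOnInterval F a b) ?_).mpr (h1.add h2)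
  funext x
  simp [h.2 a x]

theorem IsAC.ae {f f' : ℝ → ℂ} (h : IsAC f f') : ∀ᵐ x, HasDerivAt f (f' x) x := by
  filter_upwards [LocallyIntegrable.ae_hasDerivAt_integral h.1] with x hx
  have := (hx 0).add_const (f 0)
  refine (congrArg (fun F => HasDerivAt F (f' x) x) ?_).mpr this
  funext y
  simp [h.2 0 y]

theorem IsAC.mk' {f f' : ℝ → ℂ} (h1 : LocallyIntegrable f' volume)
    (h2 : ∀ a b, AbsolutelyContinuousOnInterval f a b) (h3 : ∀ᵐ x, HasDerivAt f (f' x) x) :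
    IsAC f f' := by
  refine ⟨h1, fun a b => ?_⟩
  have hac := (h2 a b).sub (ac_integral h1 a b)
  obtain ⟨C, hC⟩ := hac.const_of_ae_hasDerivAt_zero (by
    filter_upwards [h3, LocallyIntegrable.ae_hasDerivAt_integral h1] with x hx hx' _
    have := hx.sub (hx' a)
    rwa [sub_self] at this)
  have e1 := hC a (by simp)
  have e2 := hC b (by simp)
  simp only [Pi.sub_apply, integral_same] at e1 e2
  rw [← e2] at e1
  linear_combination e1

theorem IsAC.continuous {f f' : ℝ → ℂ} (h : IsAC f f') : Continuous f := by
  have : f = fun x => (∫ v in (0:ℝ)..x, f' v) + f 0 := by funext x; simp [h.2 0 x]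
  rw [this]
  exact (intervalIntegral.continuous_primitive (fun a b => locInt_ii h.1 a b) 0).add continuous_const

theorem locInt_mul_cont {f g : ℝ → ℂ} (hf : LocallyIntegrable f volume) (hg : Continuous g) :
    LocallyIntegrable (fun x => f x * g x) volume := by
  rw [locallyIntegrable_iff] at *
  intro k hk
  exact (hf k hk).mul_continuousOn hg.continuousOn hk

theorem cont_mul_locInt {f g : ℝ → ℂ} (hf : LocallyIntegrable f volume) (hg : Continuous g) :
    LocallyIntegrable (fun x => g x * f x) volume := by
  simpa [mul_comm] using locInt_mul_cont hf hg

theorem IsAC.mul {f f' g g' : ℝ → ℂ} (hf : IsAC f f') (hg : IsAC g g') :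
    IsAC (fun x => f x * g x) (fun x => f' x * g x + f x * g' x) := by
  refine IsAC.mk' ?_ ?_ ?_
  · exact (locInt_mul_cont hf.1 hg.continuous).add (cont_mul_locInt hg.1 hf.continuous)
  · intro a b; exact (hf.ac a b).smul (hg.ac a b)
  · filter_upwards [hf.ae, hg.ae] with x h1 h2
    exact h1.mul h2

theorem IsAC.add {f f' g g' : ℝ → ℂ} (hf : IsAC f f') (hg : IsAC g g') :
    IsAC (fun x => f x + g x) (fun x => f' x + g' x) := by
  refine ⟨hf.1.add hg.1, fun a b => ?_⟩
  rw [intervalIntegral.integral_add (locInt_ii hf.1 a b) (locInt_ii hg.1 a b), hf.2, hg.2]; ring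

theorem IsAC.const_mul {f f' : ℝ → ℂ} (hf : IsAC f f') (c : ℂ) :
    IsAC (fun x => c * f x) (fun x => c * f' x) := by
  refine ⟨hf.1.smul c, fun a b => ?_⟩
  rw [intervalIntegral.integral_const_mul, hf.2]; ring

theorem IsAC.congr {f f' g g' : ℝ → ℂ} (hf : IsAC f f') (h1 : ∀ x, f x = g x)
    (h2 : ∀ x, f' x = g' x) : IsAC g g' := by
  rw [← funext h1, ← funext h2]; exact hf

theorem IsAC.of_deriv_off {f f' : ℝ → ℂ} (hc : Continuous f)
    (hd : ∀ x, x ≠ 0 → HasDerivAt f (f' x) x) (hf' : LocallyIntegrable f' volume) :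
    IsAC f f' := by
  refine ⟨hf', fun a b => ?_⟩
  exact integral_eq_of_hasDerivAt_off_countable f f' (countable_singleton (0:ℝ)) hc.continuousOn
    (fun x hx => hd x (by simpa using hx.2)) (locInt_ii hf' a b)

theorem IsAC.of_deriv {f f' : ℝ → ℂ} (hd : ∀ x, HasDerivAt f (f' x) x) (hf' : Continuous f') :
    IsAC f f' :=
  IsAC.of_deriv_off (continuous_iff_continuousAt.2 fun x => (hd x).continuousAt)
    (fun x _ => hd x) hf'.locallyIntegrable

theorem IsAC.conj {f f' : ℝ → ℂ} (hf : IsAC f f') :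
    IsAC (fun x => star (f x)) (fun x => star (f' x)) := by
  have hl : LocallyIntegrable (fun x => star (f' x)) volume := by
    have h0 := hf.1
    rw [locallyIntegrable_iff] at *
    intro k hk
    exact Complex.conjCLE.toContinuousLinearMap.integrable_comp (h0 k hk)
  refine ⟨hl, fun a b => ?_⟩
  have h2 := hf.2 a b
  rw [← star_sub, ← h2]
  simp only [intervalIntegral]
  simp only [star_sub, Complex.star_def, integral_conj]

theorem IsAC.integral_eq_zero {f f' : ℝ → ℂ} (hf : IsAC f f') (h1 : Integrable f)
    (h2 : Integrable f') : ∫ x, f' x = 0 := by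
  have ht := intervalIntegral_tendsto_integral (μ := volume) h2 tendsto_neg_atTop_atBot tendsto_id
  have hi : Integrable (fun x : ℝ => f x - f (-x)) := h1.sub h1.comp_neg
  refine IntegrableAtFilter.eq_zero_of_tendsto (l := atTop) (f := fun x : ℝ => f x - f (-x))
    (μ := volume) (hi.integrableAtFilter _) ?_ ?_
  · intro s hs
    obtain ⟨a, ha⟩ := mem_atTop_sets.1 hs
    refine top_le_iff.1 ?_
    rw [← Real.volume_Ici (a := a)]
    exact measure_mono ha
  · refine ht.congr fun x => ?_
    exact hf.2 (-x) x

end ACpart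

section FTpart
open Set
open scoped SchwartzMap

theorem l1_pair {f g : ℝ → ℂ} (hf : Integrable f) (hg : Integrable g) :
    ∫ ξ, 𝓕 f ξ * g ξ = ∫ x, f x * 𝓕 g x := by
  simpa using! VectorFourier.integral_bilin_fourierIntegral_eq_flip (ContinuousLinearMap.mul ℂ ℂ)
    (L := innerₗ ℝ) continuous_fourierChar continuous_inner hf hg

theorem l1_pair_inv {f g : ℝ → ℂ} (hf : Integrable f) (hg : Integrable g) :
    ∫ ξ, 𝓕⁻ f ξ * g ξ = ∫ x, f x * 𝓕⁻ g x := by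
  rw [fourierInv_eq_fourier_comp_neg]
  rw [l1_pair hf.comp_neg hg, ← integral_neg_eq_self]
  simp [fourierInv_eq_fourier_neg]

theorem ft_cont {f : ℝ → ℂ} (hf : Integrable f) : Continuous (𝓕 f) :=
  VectorFourier.fourierIntegral_continuous Real.continuous_fourierChar
    (innerSL ℝ).continuous₂ hf

theorem ft_inv_cont {f : ℝ → ℂ} (hf : Integrable f) : Continuous (𝓕⁻ f) := by
  rw [fourierInv_eq_fourier_comp_neg]; exact ft_cont hf.comp_neg

theorem ofReal_schwartz {g : ℝ → ℝ} (hg : ContDiff ℝ (⊤ : ℕ∞) g) (hs : HasCompactSupport g) :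
    ∃ φ : 𝓢(ℝ, ℂ), ∀ x, φ x = (g x : ℂ) := by
  have h2 : HasCompactSupport (fun x => (g x : ℂ)) := hs.comp_left (g := fun x : ℝ => (x : ℂ)) (by simp)
  exact ⟨h2.toSchwartzMap (Complex.ofRealCLM.contDiff.comp hg), fun x => rfl⟩

theorem ft_ae {f : ℝ → ℂ} (h1 : Integrable f) (h2 : MemLp f 2 volume) :
    𝓕 f =ᵐ[volume] (𝓕 (h2.toLp f) : Lp ℂ 2 (volume : Measure ℝ)) := by
  refine ae_eq_of_integral_contDiff_smul_eq (ft_cont h1).locallyIntegrable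
    ((Lp.memLp _).locallyIntegrable (by norm_num)) ?_
  intro g hg hs
  obtain ⟨φ, hφ⟩ := ofReal_schwartz hg hs
  have e1 := congrArg (fun T : 𝓢'(ℝ, ℂ) => T φ) (Lp.fourier_toTemperedDistribution_eq (h2.toLp f))
  simp only [TemperedDistribution.fourier_apply, Lp.toTemperedDistribution_apply, smul_eq_mul] at e1
  have e2 := l1_pair h1 φ.integrable
  simp only [Complex.real_smul, ← hφ]
  rw [← e1]
  simp_rw [mul_comm (φ _)]
  rw [e2]
  refine integral_congr_ae ?_
  filter_upwards [h2.coeFn_toLp] with x hx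
  rw [hx, mul_comm]; rfl

theorem ft_inv_ae {f : ℝ → ℂ} (h1 : Integrable f) (h2 : MemLp f 2 volume) :
    𝓕⁻ f =ᵐ[volume] (𝓕⁻ (h2.toLp f) : Lp ℂ 2 (volume : Measure ℝ)) := by
  refine ae_eq_of_integral_contDiff_smul_eq (ft_inv_cont h1).locallyIntegrable
    ((Lp.memLp _).locallyIntegrable (by norm_num)) ?_
  intro g hg hs
  obtain ⟨φ, hφ⟩ := ofReal_schwartz hg hs
  have e1 := congrArg (fun T : 𝓢'(ℝ, ℂ) => T φ)
    (Lp.fourierInv_toTemperedDistribution_eq (h2.toLp f))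
  simp only [TemperedDistribution.fourierInv_apply, Lp.toTemperedDistribution_apply,
    smul_eq_mul] at e1
  have e2 := l1_pair_inv h1 φ.integrable
  simp only [Complex.real_smul, ← hφ]
  rw [← e1]
  simp_rw [mul_comm (φ _)]
  rw [e2]
  refine integral_congr_ae ?_
  filter_upwards [h2.coeFn_toLp] with x hx
  rw [hx, mul_comm, SchwartzMap.fourierInv_coe]

theorem ft_memLp {f : ℝ → ℂ} (h1 : Integrable f) (h2 : MemLp f 2 volume) :
    MemLp (𝓕 f) 2 volume :=
  (memLp_congr_ae (ft_ae h1 h2)).2 (Lp.memLp _)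

theorem inv_ind (a b x : ℝ) (hab : a ≤ b) :
    (2 * π * I * x) * 𝓕⁻ ((Ioc a b).indicator (fun _ => (1:ℂ))) x =
      cexp (2 * π * I * x * b) - cexp (2 * π * I * x * a) := by
  have h : ∀ ξ : ℝ, HasDerivAt (fun ξ : ℝ => cexp (2 * π * I * x * ξ))
      ((2 * π * I * x) * cexp (2 * π * I * x * ξ)) ξ := by
    intro ξ
    have := (((hasDerivAt_id (ξ : ℂ)).const_mul (2 * π * I * x)).cexp).comp_ofReal
    simpa [mul_comm] using this
  rw [← intervalIntegral.integral_eq_sub_of_hasDerivAt (fun ξ _ => h ξ)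
    (Continuous.intervalIntegrable (by fun_prop) _ _), intervalIntegral.integral_const_mul,
    intervalIntegral.integral_of_le hab, fourierInv_eq', ← integral_indicator measurableSet_Ioc]
  congr 2
  ext ξ
  by_cases hξ : ξ ∈ Ioc a b
  · simp only [hξ, indicator_of_mem, smul_eq_mul, mul_one]
    congr 1
    simp
    ring
  · simp [hξ]

theorem ft_ac {f : ℝ → ℂ} (h1 : Integrable f) (h2 : MemLp (fun x : ℝ => (x : ℂ) * f x) 2 volume) :
    ∃ G, MemLp G 2 volume ∧ IsAC (𝓕 f) G := by
  have hA : MemLp (fun x : ℝ => (-2 * π * I * x) * f x) 2 volume := by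
    have := h2.const_mul (-2 * π * I)
    refine (memLp_congr_ae (ae_of_all _ fun x => ?_)).1 this
    ring
  set G : Lp ℂ 2 (volume : Measure ℝ) := 𝓕 (hA.toLp _) with hG
  have hL : LocallyIntegrable G volume := (Lp.memLp G).locallyIntegrable (by norm_num)
  refine ⟨G, Lp.memLp _, hL, ?_⟩
  have key : ∀ a b : ℝ, a ≤ b → ∫ x in a..b, G x = 𝓕 f b - 𝓕 f a := by
    intro a b hab
    have hfin : volume (Ioc a b) ≠ ⊤ := by simp
    rw [intervalIntegral.integral_of_le hab,
      ← L2.inner_indicatorConstLp_one (𝕜 := ℂ) measurableSet_Ioc hfin G, hG]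
    have e0 : 𝓕 (𝓕⁻ (indicatorConstLp 2 measurableSet_Ioc hfin (1:ℂ) :
        Lp ℂ 2 (volume : Measure ℝ)) : Lp ℂ 2 (volume : Measure ℝ)) =
        (indicatorConstLp 2 measurableSet_Ioc hfin (1:ℂ) : Lp ℂ 2 (volume : Measure ℝ)) :=
      FourierTransform.fourier_fourierInv_eq _
    refine (congrArg (fun q : Lp ℂ 2 (volume : Measure ℝ) =>
      inner ℂ q (𝓕 (hA.toLp _) : Lp ℂ 2 (volume : Measure ℝ))) e0.symm).trans ?_
    refine (Lp.inner_fourier_eq _ _).trans ?_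
    rw [L2.inner_def]
    have hm : MemLp ((Ioc a b).indicator (fun _ => (1:ℂ))) 2 volume :=
      memLp_indicator_const 2 measurableSet_Ioc 1 (Or.inr hfin)
    have hi : Integrable ((Ioc a b).indicator (fun _ => (1:ℂ))) volume :=
      (memLp_one_iff_integrable.1 (memLp_indicator_const 1 measurableSet_Ioc 1 (Or.inr hfin)))
    have e := ft_inv_ae hi hm
    change _ =ᵐ[volume] (𝓕⁻ (indicatorConstLp 2 measurableSet_Ioc hfin (1:ℂ)) :
      Lp ℂ 2 (volume : Measure ℝ)) at e
    rw [fourier_eq', fourier_eq', ← integral_sub]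
    · refine integral_congr_ae ?_
      filter_upwards [e, hA.coeFn_toLp] with x hx hx'
      rw [← hx, hx']
      have k := congrArg (starRingEnd ℂ) (inv_ind a b x hab)
      simp only [map_mul, map_sub, ← Complex.exp_conj, Complex.conj_I, Complex.conj_ofReal,
        map_ofNat] at k
      simp only [RCLike.inner_apply, smul_eq_mul]
      have e1 : ∀ c : ℝ, (↑(-2 * π * (c * (starRingEnd ℝ) x)) * I : ℂ) = 2 * π * -I * x * c := by
        intro c
        simp
        ring
      rw [e1, e1, ← sub_mul, ← k]
      ring
    · have := (fourierIntegral_convergent_iff (V := ℝ) (μ := volume) (f := f) b).2 h1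
      simpa only [Circle.smul_def, Real.fourierChar_apply, mul_neg, neg_mul] using this
    · have := (fourierIntegral_convergent_iff (V := ℝ) (μ := volume) (f := f) a).2 h1
      simpa only [Circle.smul_def, Real.fourierChar_apply, mul_neg, neg_mul] using this
  intro a b
  rcases le_total a b with h | h
  · exact key a b h
  · rw [intervalIntegral.integral_symm, key b a h]; ring

end FTpart

section Interp
open Set

theorem prodInt {f g : ℝ → ℂ} (hf : MemLp f 2 volume) (hg : MemLp g 2 volume) :
    Integrable (fun x => ‖f x‖ * ‖g x‖) volume :=
  hf.norm.integrable_mul hg.norm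

theorem memLp_down {G : ℝ → ℂ} {m : ℕ} (h0 : MemLp G 2 volume)
    (h : MemLp (fun x : ℝ => (x : ℂ) ^ m * G x) 2 volume) {k : ℕ} (hk : k ≤ m) :
    MemLp (fun x : ℝ => (x : ℂ) ^ k * G x) 2 volume := by
  refine MemLp.mono (h.norm.add h0.norm) (AEStronglyMeasurable.mul (by fun_prop) h0.1)
    (ae_of_all _ fun x => ?_)
  simp only [Pi.add_apply]
  rw [Real.norm_of_nonneg (by positivity), norm_mul, norm_mul, norm_pow, norm_pow, ← add_one_mul]
  gcongr
  rcases le_total 1 ‖(x : ℂ)‖ with h1 | h1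
  · exact (pow_le_pow_right₀ h1 hk).trans (by linarith)
  · exact (pow_le_one₀ (norm_nonneg _) h1).trans (by linarith [pow_nonneg (norm_nonneg (x : ℂ)) m])

noncomputable def rr (R x : ℝ) : ℂ := ((x * (1 - x ^ 2 / R ^ 2) : ℝ) : ℂ)
noncomputable def rr1 (R x : ℝ) : ℂ := ((1 - 3 * x ^ 2 / R ^ 2 : ℝ) : ℂ)
noncomputable def rr2 (R x : ℝ) : ℂ := ((-6 * x / R ^ 2 : ℝ) : ℂ)

theorem rr_ac (R : ℝ) : IsAC (rr R) (rr1 R) := by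
  refine IsAC.of_deriv (fun x => ?_) (by unfold rr1; fun_prop)
  unfold rr rr1
  refine HasDerivAt.ofReal_comp ?_
  have := (hasDerivAt_id x).mul (((hasDerivAt_pow 2 x).div_const (R ^ 2)).const_sub 1)
  refine this.congr_deriv ?_
  simp; ring

theorem rr1_ac (R : ℝ) : IsAC (rr1 R) (rr2 R) := by
  refine IsAC.of_deriv (fun x => ?_) (by unfold rr2; fun_prop)
  unfold rr2 rr1
  refine HasDerivAt.ofReal_comp ?_
  have := ((((hasDerivAt_pow 2 x).const_mul 3).div_const (R ^ 2)).const_sub 1)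
  refine this.congr_deriv ?_
  simp; ring

theorem IsAC.pow {f f' : ℝ → ℂ} (h : IsAC f f') (n : ℕ) :
    IsAC (fun x => f x ^ (n + 1)) (fun x => (n + 1) * f x ^ n * f' x) := by
  induction n with
  | zero => simpa using h
  | succ n ih =>
    refine (ih.mul h).congr (fun x => by ring) (fun x => by push_cast; ring)

theorem rr_le {R x : ℝ} (hR : 1 ≤ R) (hx : |x| ≤ R) : ‖rr R x‖ ≤ |x| := by
  unfold rr
  rw [Complex.norm_real, Real.norm_eq_abs, abs_mul]
  have h1 : x ^ 2 / R ^ 2 ≤ 1 := by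
    rw [div_le_one (by positivity)]; exact sq_le_sq' (by linarith [abs_le.1 hx]) (abs_le.1 hx).2
  have h2 : 0 ≤ x ^ 2 / R ^ 2 := by positivity
  have : |1 - x ^ 2 / R ^ 2| ≤ 1 := abs_le.2 ⟨by linarith, by linarith⟩
  nlinarith [abs_nonneg x]

theorem rr1_le {R x : ℝ} (hR : 1 ≤ R) (hx : |x| ≤ R) : ‖rr1 R x‖ ≤ 2 := by
  unfold rr1
  rw [Complex.norm_real, Real.norm_eq_abs]
  have h1 : x ^ 2 / R ^ 2 ≤ 1 := by
    rw [div_le_one (by positivity)]; exact sq_le_sq' (by linarith [abs_le.1 hx]) (abs_le.1 hx).2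
  have h2 : 0 ≤ x ^ 2 / R ^ 2 := by positivity
  rw [mul_div_assoc]
  exact abs_le.2 ⟨by linarith, by linarith⟩

theorem rr2_le {R x : ℝ} (hR : 1 ≤ R) (hx : |x| ≤ R) : ‖rr2 R x‖ ≤ 6 := by
  unfold rr2
  rw [Complex.norm_real, Real.norm_eq_abs, abs_div, abs_mul, abs_of_nonneg (sq_nonneg R),
    div_le_iff₀ (by positivity)]
  norm_num
  nlinarith

theorem rr_end (R : ℝ) (hR : 1 ≤ R) : rr R R = 0 ∧ rr R (-R) = 0 := by
  have : R ≠ 0 := by positivity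
  have h : 1 - R ^ 2 / R ^ 2 = 0 := by field_simp; ring
  constructor
  · simp only [rr, h]; simp
  · simp only [rr, neg_sq, h]; simp

theorem rr_ge {R x : ℝ} (hR : 1 ≤ R) (hx : |x| ≤ R / 2) : |x| ≤ 2 * ‖rr R x‖ := by
  unfold rr
  rw [Complex.norm_real, Real.norm_eq_abs, abs_mul]
  have h1 : x ^ 2 / R ^ 2 ≤ 1 / 2 := by
    rw [div_le_iff₀ (by positivity)]; nlinarith [abs_nonneg x, sq_abs x]
  have : 1 / 2 ≤ |1 - x ^ 2 / R ^ 2| := (by linarith : (1:ℝ)/2 ≤ 1 - x ^ 2 / R ^ 2).trans (le_abs_self _)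
  nlinarith [abs_nonneg x]

theorem interp_core {G : ℝ → ℂ} (hG : Continuous G) (m : ℕ) {B : ℝ → ℝ} (hB : Integrable B volume)
    (hB0 : ∀ x, 0 ≤ B x)
    (h : ∀ R : ℝ, 1 ≤ R → ∃ Φ Φ' : ℝ → ℂ, IsAC Φ Φ' ∧ Φ R = 0 ∧ Φ (-R) = 0 ∧
      ∀ x, |x| ≤ R → ‖rr R x ^ (2 * m) * (G x * star (G x)) - Φ' x‖ ≤ B x) :
    MemLp (fun x : ℝ => (x : ℂ) ^ m * G x) 2 volume := by
  have hc : Continuous (fun x : ℝ => (x : ℂ) ^ m * G x) := by fun_prop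
  rw [memLp_two_iff_integrable_sq_norm hc.aestronglyMeasurable]
  refine integrable_of_intervalIntegral_norm_bounded (l := atTop)
    (a := fun R : ℝ => -(R / 2)) (b := fun R => R / 2) ((2 : ℝ) ^ (2 * m) * ∫ x, B x)
    (fun R => (Continuous.integrableOn_Ioc (by fun_prop))) ?_ ?_ ?_
  · exact tendsto_neg_atTop_atBot.comp (tendsto_id.atTop_div_const (by norm_num))
  · exact tendsto_id.atTop_div_const (by norm_num)
  filter_upwards [eventually_ge_atTop 1] with R hR
  obtain ⟨Φ, Φ', hac, h1, h2, h3⟩ := h R hR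
  have hrc : Continuous (rr R) := (rr_ac R).continuous
  have hsq : ∀ x, rr R x ^ (2 * m) * (G x * star (G x)) =
      (((‖rr R x‖ ^ m * ‖G x‖) ^ 2 : ℝ) : ℂ) := by
    intro x
    have e1 : rr R x ^ 2 = ((‖rr R x‖ ^ 2 : ℝ) : ℂ) := by
      unfold rr
      rw [Complex.norm_real, Real.norm_eq_abs, sq_abs]; push_cast; rfl
    rw [pow_mul, e1, Complex.star_def, Complex.mul_conj, Complex.normSq_eq_norm_sq]
    push_cast
    ring
  have hi1 : IntervalIntegrable (fun x => rr R x ^ (2 * m) * (G x * star (G x))) volume (-R) R :=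
    Continuous.intervalIntegrable (by fun_prop) _ _
  have e : ∫ x in (-R)..R, rr R x ^ (2 * m) * (G x * star (G x)) =
      ∫ x in (-R)..R, (rr R x ^ (2 * m) * (G x * star (G x)) - Φ' x) := by
    rw [intervalIntegral.integral_sub hi1 (locInt_ii hac.1 _ _), hac.2, h1, h2]; simp
  have hle : ‖∫ x in (-R)..R, rr R x ^ (2 * m) * (G x * star (G x))‖ ≤ ∫ x, B x := by
    rw [e]
    refine (intervalIntegral.norm_integral_le_of_norm_le (by linarith)
      (ae_of_all _ fun x hx => h3 x (abs_le.2 ⟨hx.1.le, hx.2⟩)) hB.intervalIntegrable).trans ?_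
    rw [intervalIntegral.integral_of_le (by linarith)]
    exact setIntegral_le_integral hB (ae_of_all _ hB0)
  simp only [hsq] at hle
  rw [intervalIntegral.integral_ofReal, Complex.norm_real, Real.norm_eq_abs] at hle
  have hle2 := (le_abs_self _).trans hle
  have hpc : Continuous (fun x => (‖rr R x‖ ^ m * ‖G x‖) ^ 2) := by fun_prop
  calc ∫ x in -(R/2)..R/2, ‖‖(x : ℂ) ^ m * G x‖ ^ 2‖
      ≤ ∫ x in -(R/2)..R/2, (2 : ℝ) ^ (2 * m) * (‖rr R x‖ ^ m * ‖G x‖) ^ 2 := by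
        refine intervalIntegral.integral_mono_on (by linarith)
          (Continuous.intervalIntegrable (by fun_prop) _ _)
          (Continuous.intervalIntegrable (by fun_prop) _ _) fun x hx => ?_
        rw [Real.norm_of_nonneg (by positivity), norm_mul, norm_pow, Complex.norm_real,
          Real.norm_eq_abs]
        have := pow_le_pow_left₀ (abs_nonneg x) (rr_ge hR (abs_le.2 hx)) m
        calc (|x| ^ m * ‖G x‖) ^ 2 ≤ ((2 * ‖rr R x‖) ^ m * ‖G x‖) ^ 2 := by gcongr
          _ = _ := by rw [mul_pow]; ring
    _ = (2 : ℝ) ^ (2 * m) * ∫ x in -(R/2)..R/2, (‖rr R x‖ ^ m * ‖G x‖) ^ 2 := by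
        rw [intervalIntegral.integral_const_mul]
    _ ≤ (2 : ℝ) ^ (2 * m) * ∫ x in (-R)..R, (‖rr R x‖ ^ m * ‖G x‖) ^ 2 := by
        gcongr
        refine intervalIntegral.integral_mono_interval (by linarith) (by linarith) (by linarith)
          (ae_of_all _ fun x => by positivity) (hpc.intervalIntegrable _ _)
    _ ≤ _ := by gcongr


theorem conj_norm (z : ℂ) : ‖star z‖ = ‖z‖ := norm_star z

theorem interp_all {g g1 g2 g3 g4 : ℝ → ℂ} (a0 : IsAC g g1) (a1 : IsAC g1 g2) (a2 : IsAC g2 g3)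
    (a3 : IsAC g3 g4) (h0 : MemLp g 2 volume) (h1 : MemLp g1 2 volume) (h2 : MemLp g2 2 volume)
    (h3 : MemLp g3 2 volume) (h4 : MemLp g4 2 volume)
    (h5 : MemLp (fun x : ℝ => (x : ℂ) ^ 5 * g x) 2 volume) :
    MemLp (fun x : ℝ => (x : ℂ) ^ 2 * g2 x) 2 volume ∧
    MemLp (fun x : ℝ => (x : ℂ) ^ 3 * g1 x) 2 volume ∧
    MemLp (fun x : ℝ => (x : ℂ) ^ 1 * g3 x) 2 volume := by
  have k2 := memLp_down h0 h5 (show 2 ≤ 5 by norm_num)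
  have k3 := memLp_down h0 h5 (show 3 ≤ 5 by norm_num)
  have k4 := memLp_down h0 h5 (show 4 ≤ 5 by norm_num)
  have A : MemLp (fun x : ℝ => (x : ℂ) ^ 2 * g2 x) 2 volume := by
    refine interp_core a2.continuous 2 (((prodInt k4 h4).add ((prodInt k3 h3).const_mul 16)).add
      (((prodInt k2 h2).const_mul 48).add ((prodInt k3 h2).const_mul 24)))
      (fun x => by simp only [Pi.add_apply]; positivity) fun R hR => ?_
    have d1 := ((rr_ac R).pow 3).mul (a2.mul a1.conj)
    have d2 := (((rr_ac R).pow 3).mul (a3.mul a0.conj)).const_mul (-1)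
    have d3 := ((((rr_ac R).pow 2).mul (rr1_ac R)).mul (a2.mul a0.conj)).const_mul (-4)
    refine ⟨_, _, (d1.add d2).add d3, ?_, ?_, fun x hx => ?_⟩
    · simp [(rr_end R hR).1]
    · simp [(rr_end R hR).2]
    have b0 := rr_le hR hx
    have b1 := rr1_le hR hx
    have b2 := rr2_le hR hx
    refine (le_of_eq (congrArg norm (?_ : _ = (rr R x ^ 4 * (g4 x * star (g x)) +
      8 * rr R x ^ 3 * rr1 R x * (g3 x * star (g x))) +
      (12 * rr R x ^ 2 * rr1 R x ^ 2 * (g2 x * star (g x)) +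
       4 * rr R x ^ 3 * rr2 R x * (g2 x * star (g x)))))).trans ?_
    · push_cast; ring
    refine (norm_add_le _ _).trans (add_le_add ((norm_add_le _ _).trans (add_le_add ?_ ?_))
      ((norm_add_le _ _).trans (add_le_add ?_ ?_))) <;>
    simp only [norm_neg, norm_mul, norm_pow, conj_norm, Complex.norm_real, Real.norm_eq_abs,
        Complex.norm_ofNat]
    · calc ‖rr R x‖ ^ 4 * (‖g4 x‖ * ‖g x‖) ≤ |x| ^ 4 * (‖g4 x‖ * ‖g x‖) := by gcongr
        _ = _ := by ring
    · calc 8 * ‖rr R x‖ ^ 3 * ‖rr1 R x‖ * (‖g3 x‖ * ‖g x‖) ≤ 8 * |x| ^ 3 * 2 * (‖g3 x‖ * ‖g x‖) := by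
            gcongr
        _ = _ := by ring
    · calc 12 * ‖rr R x‖ ^ 2 * ‖rr1 R x‖ ^ 2 * (‖g2 x‖ * ‖g x‖) ≤
            12 * |x| ^ 2 * 2 ^ 2 * (‖g2 x‖ * ‖g x‖) := by gcongr
        _ = _ := by ring
    · calc 4 * ‖rr R x‖ ^ 3 * ‖rr2 R x‖ * (‖g2 x‖ * ‖g x‖) ≤
            4 * |x| ^ 3 * 6 * (‖g2 x‖ * ‖g x‖) := by gcongr
        _ = _ := by ring
  have B : MemLp (fun x : ℝ => (x : ℂ) ^ 3 * g1 x) 2 volume := by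
    refine interp_core a1.continuous 3 (((prodInt h5 h1).const_mul 12).add (prodInt k4 A))
      (fun x => by simp only [Pi.add_apply]; positivity) fun R hR => ?_
    refine ⟨_, _, ((rr_ac R).pow 5).mul (a1.mul a0.conj), ?_, ?_, fun x hx => ?_⟩
    · simp [(rr_end R hR).1]
    · simp [(rr_end R hR).2]
    have b0 := rr_le hR hx
    have b1 := rr1_le hR hx
    have e : rr R x ^ (2 * 3) * (g1 x * star (g1 x)) -
        (((5 : ℕ) + 1) * rr R x ^ 5 * rr1 R x * (g1 x * star (g x)) +
          rr R x ^ (5 + 1) * (g2 x * star (g x) + g1 x * star (g1 x))) =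
        -(6 * rr R x ^ 5 * rr1 R x * (g1 x * star (g x))) +
         - (rr R x ^ 6 * (g2 x * star (g x))) := by push_cast; ring
    rw [e]
    refine (norm_add_le _ _).trans (add_le_add ?_ ?_)
    · simp only [norm_neg, norm_mul, norm_pow, conj_norm, Complex.norm_real, Real.norm_eq_abs,
        Complex.norm_ofNat]
      calc 6 * ‖rr R x‖ ^ 5 * ‖rr1 R x‖ * (‖g1 x‖ * ‖g x‖) ≤ 6 * |x| ^ 5 * 2 * (‖g1 x‖ * ‖g x‖) := by
            gcongr
        _ = _ := by ring
    · simp only [norm_neg, norm_mul, norm_pow, conj_norm, Complex.norm_real, Real.norm_eq_abs]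
      calc ‖rr R x‖ ^ 6 * (‖g2 x‖ * ‖g x‖) ≤ |x| ^ 6 * (‖g2 x‖ * ‖g x‖) := by gcongr
        _ = _ := by ring
  refine ⟨A, B, ?_⟩
  have A1 := memLp_down h2 A (show 1 ≤ 2 by norm_num)
  refine interp_core a3.continuous 1 (((prodInt A1 h3).const_mul 4).add (prodInt A h4))
      (fun x => by simp only [Pi.add_apply]; positivity) fun R hR => ?_
  refine ⟨_, _, ((rr_ac R).pow 1).mul (a3.mul a2.conj), ?_, ?_, fun x hx => ?_⟩
  · simp [(rr_end R hR).1]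
  · simp [(rr_end R hR).2]
  have b0 := rr_le hR hx
  have b1 := rr1_le hR hx
  have e : rr R x ^ (2 * 1) * (g3 x * star (g3 x)) -
      (((1 : ℕ) + 1) * rr R x ^ 1 * rr1 R x * (g3 x * star (g2 x)) +
        rr R x ^ (1 + 1) * (g4 x * star (g2 x) + g3 x * star (g3 x))) =
      -(2 * rr R x ^ 1 * rr1 R x * (g3 x * star (g2 x))) +
       - (rr R x ^ 2 * (g4 x * star (g2 x))) := by push_cast; ring
  rw [e]
  refine (norm_add_le _ _).trans (add_le_add ?_ ?_)
  · simp only [norm_neg, norm_mul, norm_pow, conj_norm, Complex.norm_real, Real.norm_eq_abs,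
      Complex.norm_ofNat]
    calc 2 * ‖rr R x‖ ^ 1 * ‖rr1 R x‖ * (‖g3 x‖ * ‖g2 x‖) ≤ 2 * |x| ^ 1 * 2 * (‖g3 x‖ * ‖g2 x‖) := by
          gcongr
      _ = _ := by ring
  · simp only [norm_neg, norm_mul, norm_pow, conj_norm, Complex.norm_real, Real.norm_eq_abs]
    calc ‖rr R x‖ ^ 2 * (‖g4 x‖ * ‖g2 x‖) ≤ |x| ^ 2 * (‖g4 x‖ * ‖g2 x‖) := by gcongr
      _ = _ := by ring

end Interp

section Derivs
open Set

noncomputable def aa (x : ℝ) : ℂ := ((|x| : ℝ) : ℂ)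
noncomputable def ss (x : ℝ) : ℂ := ((Real.sign x : ℝ) : ℂ)
noncomputable def EE (t x : ℝ) : ℂ := Complex.exp (-Complex.I * t * |x| * x)

theorem ss_meas : Measurable ss := by
  unfold ss
  refine Complex.measurable_ofReal.comp ?_
  unfold Real.sign
  exact Measurable.ite measurableSet_Iio measurable_const
    (Measurable.ite measurableSet_Ioi measurable_const measurable_const)

theorem ss_norm (x : ℝ) : ‖ss x‖ ≤ 1 := by
  unfold ss
  rw [Complex.norm_real]
  rcases Real.sign_apply_eq x with h | h | h <;> simp [h]

theorem ss_mul_locInt {g : ℝ → ℂ} (hg : LocallyIntegrable g volume) :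
    LocallyIntegrable (fun x => ss x * g x) volume := by
  rw [locallyIntegrable_iff] at *
  intro k hk
  exact (hg k hk).bdd_mul (c := 1) ss_meas.aestronglyMeasurable (ae_of_all _ ss_norm)

theorem ss_locInt : LocallyIntegrable ss volume := by
  simpa using ss_mul_locInt (g := fun _ => (1:ℂ)) continuous_const.locallyIntegrable

theorem ss_ev {x : ℝ} (hx : x ≠ 0) : ∀ᶠ y in nhds x, ss y = ss x := by
  unfold ss
  rcases lt_or_gt_of_ne hx with h | h
  · filter_upwards [Iio_mem_nhds h] with y hy
    rw [Real.sign_of_neg h, Real.sign_of_neg hy]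
  · filter_upwards [Ioi_mem_nhds h] with y hy
    rw [Real.sign_of_pos h, Real.sign_of_pos hy]

theorem as_eq (x : ℝ) : aa x * ss x = x := by
  unfold aa ss
  rcases lt_trichotomy x 0 with h | h | h
  · simp [Real.sign_of_neg h, abs_of_neg h]
  · simp [h]
  · simp [Real.sign_of_pos h, abs_of_pos h]

theorem xs_eq (x : ℝ) : (x : ℂ) * ss x = aa x := by
  unfold aa ss
  rcases lt_trichotomy x 0 with h | h | h
  · simp [Real.sign_of_neg h, abs_of_neg h]
  · simp [h]
  · simp [Real.sign_of_pos h, abs_of_pos h]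

theorem aa_sq (x : ℝ) : aa x * aa x = (x : ℂ) ^ 2 := by
  unfold aa; rw [← Complex.ofReal_mul, abs_mul_abs_self]; push_cast; ring

theorem aa_ac : IsAC aa ss := by
  refine IsAC.of_deriv_off (by unfold aa; fun_prop) (fun x hx => ?_) ss_locInt
  unfold aa ss
  refine HasDerivAt.ofReal_comp ?_
  refine (hasDerivAt_abs hx).congr_deriv ?_
  rcases lt_or_gt_of_ne hx with h | h
  · simp [Real.sign_of_neg h, h]
  · simp [Real.sign_of_pos h, h]

theorem xx_ac : IsAC (fun x : ℝ => (x : ℂ)) (fun _ => 1) := by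
  refine IsAC.of_deriv (fun x => ?_) (by fun_prop)
  exact HasDerivAt.ofReal_comp (hasDerivAt_id x)

theorem ss_ac {g g1 : ℝ → ℂ} (h : IsAC g g1) (hd : ∀ x, x ≠ 0 → HasDerivAt g (g1 x) x)
    (h0 : g 0 = 0) : IsAC (fun x => ss x * g x) (fun x => ss x * g1 x) := by
  refine IsAC.of_deriv_off ?_ (fun x hx => ?_) (ss_mul_locInt h.1)
  · refine continuous_iff_continuousAt.2 fun x => ?_
    by_cases hx : x = 0
    · subst hx
      unfold ContinuousAt
      beta_reduce
      rw [h0, mul_zero]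
      refine squeeze_zero_norm (a := fun x => ‖g x‖) (fun x => ?_) ?_
      · rw [norm_mul]; exact mul_le_of_le_one_left (norm_nonneg _) (ss_norm x)
      · have := (h.continuous.norm.tendsto 0); simpa [h0] using this
    · refine ContinuousAt.mul ?_ h.continuous.continuousAt
      exact (continuousAt_const (y := ss x)).congr (by
        filter_upwards [ss_ev hx] with y hy using hy.symm)
  · refine ((hd x hx).const_mul (ss x)).congr_of_eventuallyEq ?_
    filter_upwards [ss_ev hx] with y hy
    rw [hy]

theorem EE_deriv (t x : ℝ) (hx : x ≠ 0) :
    HasDerivAt (EE t) (-(2 * I * t) * aa x * EE t x) x := by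
  unfold EE
  have ha : HasDerivAt aa (ss x) x := by
    unfold aa ss
    refine HasDerivAt.ofReal_comp ?_
    refine (hasDerivAt_abs hx).congr_deriv ?_
    rcases lt_or_gt_of_ne hx with h | h
    · simp [Real.sign_of_neg h, h]
    · simp [Real.sign_of_pos h, h]
  have hi : HasDerivAt (fun x : ℝ => (x : ℂ)) 1 x := HasDerivAt.ofReal_comp (hasDerivAt_id x)
  have := ((ha.const_mul (-I * t)).mul hi).cexp
  refine this.congr_deriv ?_
  have e := xs_eq x
  simp only [aa, ss] at *
  simp only [Pi.mul_apply]
  linear_combination (-I * t * cexp (-I * ↑t * ↑|x| * ↑x)) * e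

theorem EE_cont (t : ℝ) : Continuous (EE t) := by unfold EE; fun_prop

theorem aa_cont : Continuous aa := by unfold aa; fun_prop

theorem EE_ac (t : ℝ) : IsAC (EE t) (fun x => -(2 * I * t) * aa x * EE t x) := by
  have h1 := EE_cont t
  have h2 := aa_cont
  exact IsAC.of_deriv_off h1 (EE_deriv t) (Continuous.locallyIntegrable (by fun_prop))

theorem EE_norm (t x : ℝ) : ‖EE t x‖ = 1 := by
  unfold EE
  have : -I * t * |x| * x = ((-(t * |x| * x) : ℝ) : ℂ) * I := by push_cast; ring
  rw [this, Complex.norm_exp_ofReal_mul_I]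

theorem mem_coef {G c : ℝ → ℂ} {k : ℕ} (hG : MemLp G 2 volume)
    (h : MemLp (fun x : ℝ => (x : ℂ) ^ k * G x) 2 volume)
    (hc : AEStronglyMeasurable c volume) (hb : ∀ x, ‖c x‖ ≤ |x| ^ k) :
    MemLp (fun x => c x * G x) 2 volume := by
  refine h.mono (hc.mul hG.1) (ae_of_all _ fun x => ?_)
  rw [norm_mul, norm_mul, norm_pow, Complex.norm_real, Real.norm_eq_abs]
  gcongr; exact hb x

theorem aa_norm (x : ℝ) : ‖aa x‖ = |x| := by unfold aa; simp

theorem F_all (t : ℝ) {g g1 g2 g3 g4 : ℝ → ℂ} (d0 : ∀ x, HasDerivAt g (g1 x) x)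
    (d1 : ∀ x, HasDerivAt g1 (g2 x) x) (a2 : IsAC g2 g3) (c1 : Continuous g1)
    (a3 : IsAC g3 g4) (h0 : MemLp g 2 volume) (h1 : MemLp g1 2 volume) (h2 : MemLp g2 2 volume)
    (h3 : MemLp g3 2 volume) (h4 : MemLp g4 2 volume)
    (h5 : MemLp (fun x : ℝ => (x : ℂ) ^ 5 * g x) 2 volume) (hg0 : g 0 = 0) :
    ∃ F1 F2 F3 P F4 : ℝ → ℂ, IsAC (fun x => EE t x * g x) F1 ∧ IsAC F1 F2 ∧ IsAC F2 F3 ∧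
      IsAC P F4 ∧ (∀ x, F3 x = P x + (-3 * (2 * I * t) * g1 0) * ss x) ∧
      MemLp (fun x => EE t x * g x) 2 volume ∧ MemLp F1 2 volume ∧ MemLp F2 2 volume ∧
      MemLp F3 2 volume ∧ MemLp F4 2 volume := by
  have a0 : IsAC g g1 := IsAC.of_deriv d0 c1
  have a1 : IsAC g1 g2 := IsAC.of_deriv d1 a2.continuous
  obtain ⟨A, B, C⟩ := interp_all a0 a1 a2 a3 h0 h1 h2 h3 h4 h5
  set τ : ℂ := 2 * I * t with hτ
  have hE := EE_ac t
  have hsg : IsAC (fun x => ss x * g x) (fun x => ss x * g1 x) := ss_ac a0 (fun x _ => d0 x) hg0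
  have hsg1 : IsAC (fun x => ss x * (g1 x - g1 0)) (fun x => ss x * g2 x) := by
    refine ss_ac (g := fun x => g1 x - g1 0) ?_ (fun x _ => (d1 x).sub_const _) (by simp)
    exact IsAC.of_deriv (fun x => (d1 x).sub_const _) a2.continuous
  have hsE : IsAC (fun x => ss x * (EE t x - 1)) (fun x => ss x * (-τ * aa x * EE t x)) := by
    refine ss_ac (g := fun x => EE t x - 1) ?_ (fun x hx => (EE_deriv t x hx).sub_const _)
      (by simp [EE])
    exact IsAC.of_deriv_off ((EE_cont t).sub continuous_const)
      (fun x hx => (EE_deriv t x hx).sub_const _) hE.1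
  have hx2 := xx_ac.mul xx_ac
  have hag := aa_ac.mul a0
  have hag1 := aa_ac.mul a1
  have hag2 := aa_ac.mul a2
  have hxg := xx_ac.mul a0
  have hx2g := hx2.mul a0
  have hx2g1 := hx2.mul a1
  have hax2g := (aa_ac.mul hx2).mul a0
  -- L2 facts
  have hEm : ∀ {f : ℝ → ℂ}, MemLp f 2 volume → MemLp (fun x => EE t x * f x) 2 volume := by
    intro f hf
    refine hf.mono ((EE_cont t).aestronglyMeasurable.mul hf.1) (ae_of_all _ fun x => ?_)
    rw [norm_mul, EE_norm, one_mul]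
  have mk {G c : ℝ → ℂ} (m k : ℕ) (hG : MemLp G 2 volume)
      (h : MemLp (fun x : ℝ => (x : ℂ) ^ m * G x) 2 volume) (hk : k ≤ m)
      (hc : AEStronglyMeasurable c volume) (hb : ∀ x, ‖c x‖ ≤ |x| ^ k) :
      MemLp (fun x => c x * G x) 2 volume := mem_coef hG (memLp_down hG h hk) hc hb
  have ca := aa_cont
  have cs := ss_meas.aestronglyMeasurable (μ := (volume : Measure ℝ))
  have m_ag : MemLp (fun x => aa x * g x) 2 volume :=
    mk 5 1 h0 h5 (by norm_num) ca.aestronglyMeasurable (fun x => by simp [aa_norm])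
  have m_sg : MemLp (fun x => ss x * g x) 2 volume :=
    mk 5 0 h0 h5 (by norm_num) cs (fun x => by simpa using ss_norm x)
  have m_x2g : MemLp (fun x : ℝ => (x : ℂ) ^ 2 * g x) 2 volume := memLp_down h0 h5 (by norm_num)
  have m_xg : MemLp (fun x : ℝ => (x : ℂ) * g x) 2 volume := by
    simpa using memLp_down h0 h5 (show 1 ≤ 5 by norm_num)
  have m_x4g : MemLp (fun x : ℝ => (x : ℂ) ^ 4 * g x) 2 volume := memLp_down h0 h5 (by norm_num)
  have m_ax2g : MemLp (fun x : ℝ => (aa x * (x : ℂ) ^ 2) * g x) 2 volume :=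
    mk 5 3 h0 h5 (by norm_num) (Continuous.aestronglyMeasurable (by fun_prop))
      (fun x => by simp [aa_norm]; exact le_of_eq (by rw [← sq_abs]; ring))
  have m_axg : MemLp (fun x : ℝ => (aa x * (x : ℂ)) * g x) 2 volume :=
    mk 5 2 h0 h5 (by norm_num) (Continuous.aestronglyMeasurable (by fun_prop))
      (fun x => by simp only [norm_mul, aa_norm, Complex.norm_real, Real.norm_eq_abs]; exact le_of_eq (by ring))
  have m_ag1 : MemLp (fun x => aa x * g1 x) 2 volume :=
    mk 3 1 h1 B (by norm_num) ca.aestronglyMeasurable (fun x => by simp [aa_norm])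
  have m_sg1 : MemLp (fun x => ss x * g1 x) 2 volume :=
    mk 3 0 h1 B (by norm_num) cs (fun x => by simpa using ss_norm x)
  have m_x2g1 : MemLp (fun x : ℝ => (x : ℂ) ^ 2 * g1 x) 2 volume := memLp_down h1 B (by norm_num)
  have m_xg1 : MemLp (fun x : ℝ => (x : ℂ) * g1 x) 2 volume := by
    simpa using memLp_down h1 B (show 1 ≤ 3 by norm_num)
  have m_ax2g1 : MemLp (fun x : ℝ => (aa x * (x : ℂ) ^ 2) * g1 x) 2 volume :=
    mk 3 3 h1 B (by norm_num) (Continuous.aestronglyMeasurable (by fun_prop))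
      (fun x => by simp [aa_norm]; exact le_of_eq (by rw [← sq_abs]; ring))
  have m_ag2 : MemLp (fun x => aa x * g2 x) 2 volume :=
    mk 2 1 h2 A (by norm_num) ca.aestronglyMeasurable (fun x => by simp [aa_norm])
  have m_sg2 : MemLp (fun x => ss x * g2 x) 2 volume :=
    mk 2 0 h2 A (by norm_num) cs (fun x => by simpa using ss_norm x)
  have m_ag3 : MemLp (fun x => aa x * g3 x) 2 volume :=
    mk 1 1 h3 C (by norm_num) ca.aestronglyMeasurable (fun x => by simp [aa_norm])
  refine ⟨fun x => EE t x * (g1 x + -τ * (aa x * g x)),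
    fun x => EE t x * (g2 x + -τ * (ss x * g x) + (-2 * τ) * (aa x * g1 x) +
      τ ^ 2 * ((x : ℂ) ^ 2 * g x)),
    fun x => EE t x * (g3 x + (-3 * τ) * (aa x * g2 x) + (-3 * τ) * (ss x * g1 x) +
      (3 * τ ^ 2) * ((x : ℂ) ^ 2 * g1 x) + (3 * τ ^ 2) * ((x : ℂ) * g x) +
      (-τ ^ 3) * ((aa x * (x : ℂ) ^ 2) * g x)),
    fun x => EE t x * (g3 x + (-3 * τ) * (aa x * g2 x) + (-3 * τ) * (ss x * (g1 x - g1 0)) +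
      (3 * τ ^ 2) * (((x : ℂ) * (x : ℂ)) * g1 x) + (3 * τ ^ 2) * ((x : ℂ) * g x) +
      (-τ ^ 3) * ((aa x * ((x : ℂ) * (x : ℂ))) * g x)) + (-3 * τ * g1 0) * (ss x * (EE t x - 1)),
    fun x => EE t x * (g4 x + (-4 * τ) * (aa x * g3 x) + (-6 * τ) * (ss x * g2 x) +
      (6 * τ ^ 2) * ((x : ℂ) ^ 2 * g2 x) + (12 * τ ^ 2) * ((x : ℂ) * g1 x) +
      (3 * τ ^ 2) * g x + (-4 * τ ^ 3) * ((aa x * (x : ℂ) ^ 2) * g1 x) +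
      (-6 * τ ^ 3) * ((aa x * (x : ℂ)) * g x) + τ ^ 4 * ((x : ℂ) ^ 4 * g x)),
    ?_, ?_, ?_, ?_, ?_, ?_, ?_, ?_, ?_, ?_⟩
  · exact (hE.mul a0).congr (fun x => rfl) (fun x => by ring)
  · refine (hE.mul (a1.add (hag.const_mul (-τ)))).congr (fun x => rfl) (fun x => ?_)
    linear_combination (τ ^ 2 * EE t x * g x) * aa_sq x
  · refine (hE.mul (((a2.add (hsg.const_mul (-τ))).add (hag1.const_mul (-2 * τ))).add
      (hx2g.const_mul (τ ^ 2)))).congr (fun x => by ring) (fun x => ?_)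
    linear_combination (τ ^ 2 * EE t x * g x) * as_eq x + (2 * τ ^ 2 * EE t x * g1 x) * aa_sq x
  · refine ((hE.mul (((((a3.add (hag2.const_mul (-3 * τ))).add (hsg1.const_mul (-3 * τ))).add
      (hx2g1.const_mul (3 * τ ^ 2))).add (hxg.const_mul (3 * τ ^ 2))).add
      (hax2g.const_mul (-τ ^ 3)))).add (hsE.const_mul (-3 * τ * g1 0))).congr
        (fun x => by ring) (fun x => ?_)
    have e1 := aa_sq x
    have e2 := as_eq x
    have e3 := xs_eq x
    linear_combination (3 * τ ^ 2 * EE t x * g2 x + τ ^ 4 * EE t x * (x : ℂ) ^ 2 * g x) * e1 +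
      (3 * τ ^ 2 * EE t x * g1 x) * e2 + (- τ ^ 3 * EE t x * g x * x) * e3
  · intro x; ring
  · exact hEm h0
  · exact hEm (h1.add (m_ag.const_mul _))
  · exact hEm (((h2.add (m_sg.const_mul _)).add (m_ag1.const_mul _)).add (m_x2g.const_mul _))
  · exact hEm (((((h3.add (m_ag2.const_mul _)).add (m_sg1.const_mul _)).add
      (m_x2g1.const_mul _)).add (m_xg.const_mul _)).add (m_ax2g.const_mul _))
  · exact hEm ((((((((h4.add (m_ag3.const_mul _)).add (m_sg2.const_mul _)).add
      (A.const_mul _)).add (m_xg1.const_mul _)).add (h0.const_mul _)).add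
      (m_ax2g1.const_mul _)).add (m_axg.const_mul _)).add (m_x4g.const_mul _))

end Derivs

section Weak
open Set
open scoped SchwartzMap

theorem ibp {f f' q q' : ℝ → ℂ} (hf : IsAC f f') (hq : IsAC q q')
    (h1 : Integrable (fun x => f x * q x)) (h2 : Integrable (fun x => f' x * q x))
    (h3 : Integrable (fun x => f x * q' x)) : ∫ x, f x * q' x = - ∫ x, f' x * q x := by
  have := (hf.mul hq).integral_eq_zero h1 (h2.add h3)
  rw [integral_add h2 h3] at this
  exact eq_neg_of_add_eq_zero_right this

theorem int_ss {q q' : ℝ → ℂ} (hd : ∀ x, HasDerivAt q (q' x) x) (h1 : Integrable q)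
    (h2 : Integrable q') : ∫ x, ss x * q' x = -2 * q 0 := by
  have hi : Integrable (fun x => ss x * q' x) :=
    h2.bdd_mul (c := 1) ss_meas.aestronglyMeasurable (ae_of_all _ ss_norm)
  rw [← intervalIntegral.integral_Iic_add_Ioi (b := 0) hi.integrableOn hi.integrableOn]
  have e1 : ∫ x in Ioi (0:ℝ), ss x * q' x = ∫ x in Ioi (0:ℝ), q' x := by
    refine setIntegral_congr_fun measurableSet_Ioi fun x hx => ?_
    simp [ss, Real.sign_of_pos hx]
  have e2 : ∫ x in Iic (0:ℝ), ss x * q' x = ∫ x in Iic (0:ℝ), - q' x := by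
    rw [integral_Iic_eq_integral_Iio, integral_Iic_eq_integral_Iio]
    refine setIntegral_congr_fun measurableSet_Iio fun x hx => ?_
    simp [ss, Real.sign_of_neg hx]
  rw [e1, e2, integral_neg,
    integral_Ioi_of_hasDerivAt_of_tendsto' (fun x _ => hd x) h2.integrableOn
      (tendsto_zero_of_hasDerivAt_of_integrableOn_Ioi (a := 0) (fun x _ => hd x) h2.integrableOn
        h1.integrableOn),
    integral_Iic_of_hasDerivAt_of_tendsto' (fun x _ => hd x) h2.integrableOn
      (tendsto_zero_of_hasDerivAt_of_integrableOn_Iic (a := 0) (fun x _ => hd x) h2.integrableOn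
        h1.integrableOn)]
  ring

theorem inv_deriv {f f1 : ℝ → ℂ} (hf : Integrable f) (hf1 : Integrable f1)
    (h : ∀ x : ℝ, f1 x = x * f x) (w : ℝ) :
    HasDerivAt (𝓕⁻ f) ((2 * π * I) * 𝓕⁻ f1 w) w := by
  have h' : Integrable (fun x : ℝ => x • f x) := by
    refine hf1.congr (ae_of_all _ fun x => ?_)
    simp [h]
  have := (Real.hasDerivAt_fourier hf h' (-w)).scomp w (hasDerivAt_neg w)
  rw [fourierInv_eq_fourier_neg]
  refine (congrArg₂ (fun F d => HasDerivAt F d w) ?_ ?_).mpr this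
  · funext y; simp [fourierInv_eq_fourier_neg]
  · rw [Real.fourier_eq', Real.fourier_eq', ← integral_const_mul, ← integral_smul]
    congr 1
    funext y
    simp only [smul_eq_mul, h]
    simp
    ring

theorem weak_id {F F1 F2 F3 P F4 : ℝ → ℂ} {K : ℂ} (a0 : IsAC F F1) (a1 : IsAC F1 F2)
    (a2 : IsAC F2 F3) (a3 : IsAC P F4) (hP : ∀ x, F3 x = P x + K * ss x)
    (h0 : MemLp F 2 volume) (h1 : MemLp F1 2 volume) (h2 : MemLp F2 2 volume)
    (h3 : MemLp F3 2 volume) (h4 : MemLp F4 2 volume) (hFi : Integrable F) :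
    ∃ h : ℝ → ℂ, MemLp h 2 volume ∧
      ∀ᵐ x : ℝ, ((2 * π * I) ^ 4 * (x : ℂ) ^ 4) * 𝓕⁻ F x = 2 * K + h x := by
  set w : ℂ := 2 * π * I with hw
  set L : Lp ℂ 2 (volume : Measure ℝ) := 𝓕⁻ (h4.toLp F4) with hL
  refine ⟨L, Lp.memLp _, ?_⟩
  have hLl : LocallyIntegrable L volume := (Lp.memLp L).locallyIntegrable (by norm_num)
  refine ae_eq_of_integral_contDiff_smul_eq ?_ ?_ ?_
  · have := ft_inv_cont hFi
    exact Continuous.locallyIntegrable (by fun_prop)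
  · exact (continuous_const.locallyIntegrable).add hLl
  intro g hg hs
  have hex : ∀ k : ℕ, ∃ φ : 𝓢(ℝ, ℂ), ∀ x : ℝ, φ x = (x : ℂ) ^ k * (g x : ℂ) := by
    intro k
    obtain ⟨φ, hφ⟩ := ofReal_schwartz (g := fun x => x ^ k * g x) ((contDiff_id.pow k).mul hg)
      (hs.mul_left)
    exact ⟨φ, fun x => by rw [hφ]; push_cast; rfl⟩
  choose χ hχ using hex
  let q : ℕ → 𝓢(ℝ, ℂ) := fun k => 𝓕⁻ (χ k)
  have hq : ∀ k, (q k : ℝ → ℂ) = 𝓕⁻ (χ k : ℝ → ℂ) := fun k => by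
    simp only [q, SchwartzMap.fourierInv_coe]
  have hd : ∀ k x, HasDerivAt (q k) (w * q (k + 1) x) x := by
    intro k x
    rw [hq, hq]
    exact inv_deriv (χ k).integrable (χ (k + 1)).integrable
      (fun x => by rw [hχ, hχ]; ring) x
  have hac : ∀ k, IsAC (q k) (fun x => w * q (k + 1) x) := fun k =>
    IsAC.of_deriv (hd k) (continuous_const.mul (q (k + 1)).continuous)
  have hqi : ∀ {f : ℝ → ℂ} (k : ℕ), MemLp f 2 volume → Integrable (fun x => f x * q k x) :=
    fun k hf => hf.integrable_mul ((q k).memLp 2 volume)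
  have hqw : ∀ {f : ℝ → ℂ} (k : ℕ), MemLp f 2 volume → Integrable (fun x => f x * (w * q k x)) :=
    fun k hf => hf.integrable_mul (((q k).memLp 2 volume).const_mul w)
  have hsq : ∀ k, Integrable (fun x => ss x * q k x) := fun k =>
    (q k).integrable.bdd_mul (c := 1) ss_meas.aestronglyMeasurable (ae_of_all _ ss_norm)
  have hpull : ∀ (f : ℝ → ℂ) k, ∫ x, f x * (w * q k x) = w * ∫ x, f x * q k x := by
    intro f k; rw [← integral_const_mul]; congr 1; funext x; ring
  have i0 := ibp a0 (hac 3) (hqi 3 h0) (hqi 3 h1) (hqw 4 h0)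
  have i1 := ibp a1 (hac 2) (hqi 2 h1) (hqi 2 h2) (hqw 3 h1)
  have i2 := ibp a2 (hac 1) (hqi 1 h2) (hqi 1 h3) (hqw 2 h2)
  have hPq : ∀ k, Integrable (fun x => P x * q k x) := by
    intro k
    have := (hqi k h3).sub ((hsq k).const_mul K)
    refine this.congr (ae_of_all _ fun x => ?_)
    simp only [hP, Pi.sub_apply]; ring
  have hPw : Integrable (fun x => P x * (w * q 1 x)) := by
    refine ((hPq 1).const_mul w).congr (ae_of_all _ fun x => ?_)
    ring
  have i3 := ibp a3 (hac 0) (hPq 0) (hqi 0 h4) hPw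
  have i4 := int_ss (hd 0) (q 0).integrable ((q 1).integrable.const_mul w)
  have i5 : ∫ x, F3 x * q 1 x = (∫ x, P x * q 1 x) + K * ∫ x, ss x * q 1 x := by
    rw [← integral_const_mul, ← integral_add (hPq 1) ((hsq 1).const_mul K)]
    congr 1; funext x; rw [hP]; ring
  simp only [zero_add] at i3 i4
  rw [hpull] at i0 i1 i2 i3 i4
  -- assemble
  have i6 : w ^ 4 * ∫ x, F x * q 4 x = (∫ x, F4 x * q 0 x) + 2 * K * q 0 0 := by
    linear_combination w ^ 3 * i0 - w ^ 2 * i1 + w * i2 - w * i5 - i3 - K * i4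
  have j0 : q 0 0 = ∫ x, (g x : ℂ) := by
    rw [hq, Real.fourierInv_eq']
    congr 1; funext x; simp [hχ]
  have j1 : ∫ x, F x * q 4 x = ∫ x, 𝓕⁻ F x * χ 4 x := by
    rw [hq, l1_pair_inv hFi (χ 4).integrable]
  have j2 : ∫ x, F4 x * q 0 x = ∫ x, L x * χ 0 x := by
    have e1 := congrArg (fun T : 𝓢'(ℝ, ℂ) => T (χ 0))
      (Lp.fourierInv_toTemperedDistribution_eq (h4.toLp F4))
    simp only [TemperedDistribution.fourierInv_apply, Lp.toTemperedDistribution_apply,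
      smul_eq_mul] at e1
    simp_rw [mul_comm (L _)]
    rw [← e1]
    refine integral_congr_ae ?_
    filter_upwards [h4.coeFn_toLp] with x hx
    rw [hx, mul_comm]
  rw [j0, j1, j2] at i6
  have hgi : Integrable (fun x => (g x : ℂ)) := by
    refine (χ 0).integrable.congr (ae_of_all _ fun x => ?_)
    simp [hχ]
  have hLg : Integrable (fun x => L x * χ 0 x) := (Lp.memLp L).integrable_mul ((χ 0).memLp 2 volume)
  calc ∫ x, g x • (w ^ 4 * (x : ℂ) ^ 4 * 𝓕⁻ F x) = w ^ 4 * ∫ x, 𝓕⁻ F x * χ 4 x := by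
        rw [← integral_const_mul]; congr 1; funext x; rw [hχ, Complex.real_smul]; ring
    _ = _ := i6
    _ = ∫ x, (L x * χ 0 x + 2 * K * (g x : ℂ)) := by
        rw [integral_add hLg (hgi.const_mul _), integral_const_mul]
    _ = _ := by congr 1; funext x; rw [hχ, Complex.real_smul]; ring

end Weak

section Concl
open Set

theorem concl_neg {v h : ℝ → ℂ} {c b : ℂ} (hc : c ≠ 0) (hb : b ≠ 0) (hh : MemLp h 2 volume)
    (he : ∀ᵐ x : ℝ, (b * (x : ℂ) ^ 4) * v x = c + h x) :
    ¬ Integrable (fun x : ℝ => |x| ^ (7 : ℝ) * ‖v x‖ ^ 2) volume := by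
  intro hi
  have hh2 : Integrable (fun x => ‖h x‖ ^ 2) volume := hh.integrable_norm_pow (by norm_num)
  have hbig : IntegrableOn (fun x : ℝ => x⁻¹) (Ioi 1) volume := by
    have h1 := ((hi.const_mul (2 * ‖b‖ ^ 2 / ‖c‖ ^ 2)).add (hh2.const_mul (2 / ‖c‖ ^ 2))).integrableOn
      (s := Ioi (1:ℝ))
    refine Integrable.mono' h1 (by fun_prop) ?_
    filter_upwards [ae_restrict_of_ae he, ae_restrict_mem measurableSet_Ioi] with x hx hx1
    have hx0 : (0:ℝ) < x := lt_trans one_pos hx1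
    have hc0 : 0 < ‖c‖ := norm_pos_iff.2 hc
    have e1 : ‖c‖ ≤ ‖b‖ * x ^ 4 * ‖v x‖ + ‖h x‖ := by
      have : c = (b * (x : ℂ) ^ 4) * v x - h x := by rw [hx]; ring
      calc ‖c‖ = ‖(b * (x : ℂ) ^ 4) * v x - h x‖ := by rw [← this]
        _ ≤ _ := norm_sub_le _ _
        _ = _ := by simp [abs_of_pos hx0]
    have e2 : ‖c‖ ^ 2 ≤ 2 * (‖b‖ * x ^ 4 * ‖v x‖) ^ 2 + 2 * ‖h x‖ ^ 2 := by
      nlinarith [sq_nonneg (‖b‖ * x ^ 4 * ‖v x‖ - ‖h x‖), norm_nonneg (h x)]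
    simp only [Pi.add_apply]
    rw [Real.norm_of_nonneg (by positivity), abs_of_pos hx0]
    have e7 : x ^ (7:ℝ) = x ^ 7 := by exact_mod_cast Real.rpow_natCast x 7
    rw [e7]
    have e3 : x⁻¹ * ‖c‖ ^ 2 ≤ 2 * ‖b‖ ^ 2 * (x ^ 7 * ‖v x‖ ^ 2) + 2 * ‖h x‖ ^ 2 := by
      have hxi : x⁻¹ ≤ 1 := inv_le_one_of_one_le₀ (le_of_lt hx1)
      have hxi0 : 0 < x⁻¹ := inv_pos.2 hx0
      calc x⁻¹ * ‖c‖ ^ 2 ≤ x⁻¹ * (2 * (‖b‖ * x ^ 4 * ‖v x‖) ^ 2 + 2 * ‖h x‖ ^ 2) := by gcongr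
        _ = 2 * ‖b‖ ^ 2 * (x ^ 7 * ‖v x‖ ^ 2) + x⁻¹ * (2 * ‖h x‖ ^ 2) := by field_simp
        _ ≤ 2 * ‖b‖ ^ 2 * (x ^ 7 * ‖v x‖ ^ 2) + 1 * (2 * ‖h x‖ ^ 2) := by gcongr
        _ = _ := by ring
    calc x⁻¹ = (x⁻¹ * ‖c‖ ^ 2) / ‖c‖ ^ 2 := by field_simp
      _ ≤ (2 * ‖b‖ ^ 2 * (x ^ 7 * ‖v x‖ ^ 2) + 2 * ‖h x‖ ^ 2) / ‖c‖ ^ 2 := by gcongr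
      _ = _ := by ring
  exact not_integrableOn_Ioi_inv hbig

theorem concl_pos {v h : ℝ → ℂ} {c b : ℂ} (hb : b ≠ 0) (hh : MemLp h 2 volume)
    (hv : Continuous v) (he : ∀ᵐ x : ℝ, (b * (x : ℂ) ^ 4) * v x = c + h x)
    {ε : ℝ} (hε : ε ∈ Ioc (0 : ℝ) 7) :
    Integrable (fun x : ℝ => |x| ^ (7 - ε) * ‖v x‖ ^ 2) volume := by
  have hh2 : Integrable (fun x => ‖h x‖ ^ 2) volume := hh.integrable_norm_pow (by norm_num)
  have hcont : Continuous (fun x : ℝ => |x| ^ (7 - ε) * ‖v x‖ ^ 2) := by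
    refine Continuous.mul ?_ (by fun_prop)
    exact (continuous_abs).rpow_const (fun x => Or.inr (by linarith [hε.2]))
  have hpos : ∀ f : ℝ → ℝ, Continuous f → IntegrableOn f (Icc (-1) 1) volume := fun f hf =>
    hf.integrableOn_Icc
  have hJ : Integrable (fun x : ℝ => (1 + ‖x‖) ^ (-(1 + ε))) volume :=
    integrable_one_add_norm (by simp; linarith [hε.1])
  have hout : IntegrableOn (fun x : ℝ => |x| ^ (7 - ε) * ‖v x‖ ^ 2) (Icc (-1) 1)ᶜ volume := by
    have h1 := ((hJ.const_mul (2 * ‖c‖ ^ 2 * 2 ^ (1 + ε) / ‖b‖ ^ 2)).add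
      (hh2.const_mul (2 / ‖b‖ ^ 2))).integrableOn (s := (Icc (-1) 1)ᶜ)
    refine Integrable.mono' h1 hcont.aestronglyMeasurable ?_
    filter_upwards [ae_restrict_of_ae he, ae_restrict_mem measurableSet_Icc.compl] with x hx hx1
    have hx1 : 1 < |x| := by
      by_contra hcon
      exact hx1 (abs_le.1 (not_lt.1 hcon))
    have hx0 : 0 < |x| := by linarith
    have hb0 : 0 < ‖b‖ := norm_pos_iff.2 hb
    have e1 : ‖b‖ * |x| ^ 4 * ‖v x‖ ≤ ‖c‖ + ‖h x‖ := by
      calc _ = ‖(b * (x : ℂ) ^ 4) * v x‖ := by simp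
        _ ≤ _ := by rw [hx]; exact norm_add_le _ _
    have e2 : (‖b‖ * |x| ^ 4 * ‖v x‖) ^ 2 ≤ 2 * ‖c‖ ^ 2 + 2 * ‖h x‖ ^ 2 := by
      have := pow_le_pow_left₀ (by positivity) e1 2
      nlinarith [sq_nonneg (‖c‖ - ‖h x‖)]
    have e3 : |x| ^ (7 - ε) = |x| ^ (-(1 + ε)) * (|x| ^ 4) ^ 2 := by
      rw [← pow_mul, ← Real.rpow_natCast, ← Real.rpow_add hx0]; congr 1; push_cast; ring
    have e4 : |x| ^ (-(1 + ε)) ≤ 2 ^ (1 + ε) * (1 + ‖x‖) ^ (-(1 + ε)) := by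
      rw [Real.norm_eq_abs, Real.rpow_neg hx0.le, Real.rpow_neg (by positivity), ← div_eq_mul_inv,
        le_div_iff₀ (by positivity), ← div_eq_inv_mul, div_le_iff₀ (by positivity),
        ← Real.mul_rpow (by norm_num) hx0.le]
      exact Real.rpow_le_rpow (by positivity) (by linarith) (by linarith [hε.1])
    have e5 : |x| ^ (-(1 + ε)) ≤ 1 := Real.rpow_le_one_of_one_le_of_nonpos hx1.le (by linarith [hε.1])
    simp only [Pi.add_apply]
    rw [Real.norm_of_nonneg (by positivity), e3]
    have hp : 0 ≤ |x| ^ (-(1 + ε)) := by positivity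
    calc |x| ^ (-(1 + ε)) * (|x| ^ 4) ^ 2 * ‖v x‖ ^ 2
        = |x| ^ (-(1 + ε)) * (‖b‖ * |x| ^ 4 * ‖v x‖) ^ 2 / ‖b‖ ^ 2 := by field_simp
      _ ≤ |x| ^ (-(1 + ε)) * (2 * ‖c‖ ^ 2 + 2 * ‖h x‖ ^ 2) / ‖b‖ ^ 2 := by gcongr
      _ = (|x| ^ (-(1 + ε)) * (2 * ‖c‖ ^ 2) + |x| ^ (-(1 + ε)) * (2 * ‖h x‖ ^ 2)) / ‖b‖ ^ 2 := by ring
      _ ≤ ((2 ^ (1 + ε) * (1 + ‖x‖) ^ (-(1 + ε))) * (2 * ‖c‖ ^ 2) + 1 * (2 * ‖h x‖ ^ 2)) / ‖b‖ ^ 2 := by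
          gcongr
      _ = _ := by ring
  have := (hpos _ hcont).union hout
  rwa [union_compl_self, integrableOn_univ] at this

end Concl

section Final
open Set

theorem l1_of {G : ℝ → ℂ} (h0 : MemLp G 2 volume)
    (h1 : MemLp (fun x : ℝ => (x : ℂ) * G x) 2 volume) : Integrable G volume := by
  have a := h0.integrable_norm_pow (by norm_num)
  have b := h1.integrable_norm_pow (by norm_num)
  refine Integrable.mono' ((integrable_inv_one_add_sq).add (a.add b)) h0.1 (ae_of_all _ fun x => ?_)
  simp only [Pi.add_apply, norm_mul, Complex.norm_real, Real.norm_eq_abs]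
  have hx : 0 < 1 + x ^ 2 := by positivity
  have e1 : (|x| * ‖G x‖) ^ 2 = x ^ 2 * ‖G x‖ ^ 2 := by rw [mul_pow, sq_abs]
  rw [e1]
  have e2 : (1 + x ^ 2)⁻¹ * (1 + x ^ 2) = 1 := inv_mul_cancel₀ hx.ne'
  have e3 : 0 < (1 + x ^ 2)⁻¹ := by positivity
  nlinarith [sq_nonneg ((1 + x ^ 2)⁻¹ - ‖G x‖), norm_nonneg (G x),
    mul_nonneg hx.le (sq_nonneg ((1 + x ^ 2)⁻¹ - ‖G x‖)), sq_nonneg ((1 + x^2)⁻¹)]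

theorem main_aux (u₀ : ℝ → ℝ) (hu₀ : InZdot 5 4 u₀) (hmom : (∫ x : ℝ, x * u₀ x) ≠ 0)
    (t : ℝ) (ht : t ≠ 0) : ∃ (h : ℝ → ℂ) (c b : ℂ), c ≠ 0 ∧ b ≠ 0 ∧ MemLp h 2 volume ∧
      Continuous (linBO t u₀) ∧ ∀ᵐ x : ℝ, (b * (x : ℂ) ^ 4) * linBO t u₀ x = c + h x := by
  obtain ⟨⟨hm, hz⟩, hg0⟩ := hu₀
  set U : ℝ → ℂ := fun x => (u₀ x : ℂ) with hU
  unfold zNorm at hz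
  obtain ⟨hz, hz3⟩ := ENNReal.add_lt_top.1 hz
  obtain ⟨hz1, hz2⟩ := ENNReal.add_lt_top.1 hz
  have hUm : AEStronglyMeasurable U volume := Complex.continuous_ofReal.comp_aestronglyMeasurable hm
  have hU2 : MemLp U 2 volume := ⟨hUm, hz3⟩
  have hU4 : MemLp (fun x : ℝ => (x : ℂ) ^ 4 * U x) 2 volume := by
    refine ⟨AEStronglyMeasurable.mul (by fun_prop) hUm, ?_⟩
    refine lt_of_le_of_lt (le_of_eq ?_) hz2
    unfold wNorm
    refine eLpNorm_congr_norm_ae (ae_of_all _ fun x => ?_)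
    have : |x| ^ (4:ℝ) = |x| ^ 4 := by exact_mod_cast Real.rpow_natCast |x| 4
    rw [this]
    simp
  have hUk : ∀ k ≤ 4, MemLp (fun x : ℝ => (x : ℂ) ^ k * U x) 2 volume := fun k hk =>
    memLp_down hU2 hU4 hk
  set c : ℂ := -2 * π * I with hc
  have hc0 : c ≠ 0 := by simp [hc, Real.pi_ne_zero]
  let V : ℕ → ℝ → ℂ := fun k x => c ^ k * ((x : ℂ) ^ k * U x)
  have hV2 : ∀ k ≤ 4, MemLp (V k) 2 volume := fun k hk => (hUk k hk).const_mul _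
  have hVx : ∀ k ≤ 3, MemLp (fun x : ℝ => (x : ℂ) * V k x) 2 volume := by
    intro k hk
    refine (memLp_congr_ae (ae_of_all _ fun x => ?_)).1
      ((hUk (k + 1) (by omega)).const_mul (c ^ k))
    simp only [V]; ring
  have hV1 : ∀ k ≤ 3, Integrable (V k) volume := fun k hk => l1_of (hV2 k (by omega)) (hVx k hk)
  have hV0 : V 0 = U := by funext x; simp [V]
  have hd : ∀ k ≤ 2, ∀ w, HasDerivAt (𝓕 (V k)) (𝓕 (V (k + 1)) w) w := by
    intro k hk w
    have hx : Integrable (fun x : ℝ => x • V k x) := by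
      refine ((hV1 (k + 1) (by omega)).const_mul c⁻¹).congr (ae_of_all _ fun x => ?_)
      simp only [V, Complex.real_smul]; field_simp; ring
    have := Real.hasDerivAt_fourier (hV1 k (by omega)) hx w
    refine this.congr_deriv ?_
    refine congrArg (fun f : ℝ → ℂ => 𝓕 f w) ?_
    funext x
    simp only [V, smul_eq_mul, hc]; ring
  obtain ⟨g4, h4, a3⟩ := ft_ac (hV1 3 le_rfl) (hVx 3 le_rfl)
  have hgL : ∀ k ≤ 3, MemLp (𝓕 (V k)) 2 volume := fun k hk => ft_memLp (hV1 k hk) (hV2 k (by omega))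
  have hgc : ∀ k ≤ 3, Continuous (𝓕 (V k)) := fun k hk => ft_cont (hV1 k hk)
  have h5 : MemLp (fun x : ℝ => (x : ℂ) ^ 5 * 𝓕 (V 0) x) 2 volume := by
    have hcc := hgc 0 (by norm_num)
    refine ⟨Continuous.aestronglyMeasurable (by fun_prop), lt_of_le_of_lt ?_ hz1⟩
    unfold hsNorm
    rw [hV0]
    refine eLpNorm_mono_ae (ae_of_all _ fun x => ?_)
    rw [norm_mul, norm_mul, norm_pow, Complex.norm_real, Complex.norm_real,
      Real.norm_of_nonneg (by positivity : (0:ℝ) ≤ (1 + x ^ 2) ^ ((5:ℝ) / 2))]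
    gcongr
    rw [Real.norm_eq_abs]
    calc |x| ^ 5 = (x ^ 2) ^ ((5:ℝ) / 2) := by
          rw [← sq_abs, ← Real.rpow_natCast, ← Real.rpow_natCast, ← Real.rpow_mul (abs_nonneg x)]
          norm_num
      _ ≤ _ := Real.rpow_le_rpow (by positivity) (by linarith) (by norm_num)
  have hg0' : 𝓕 (V 0) 0 = 0 := by rw [hV0]; exact hg0
  obtain ⟨F1, F2, F3, P, F4, b0, b1, b2, b3, b4, m0, m1, m2, m3, m4⟩ :=
    F_all t (hd 0 (by norm_num)) (hd 1 (by norm_num))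
      (IsAC.of_deriv (hd 2 le_rfl) (hgc 3 le_rfl)) (hgc 1 (by norm_num)) a3
      (hgL 0 (by norm_num)) (hgL 1 (by norm_num)) (hgL 2 (by norm_num)) (hgL 3 (by norm_num)) h4
      h5 hg0'
  have hgi : Integrable (𝓕 (V 0)) volume := l1_of (hgL 0 (by norm_num)) (by
    simpa using memLp_down (hgL 0 (by norm_num)) h5 (show 1 ≤ 5 by norm_num))
  have hFi : Integrable (fun x => EE t x * 𝓕 (V 0) x) volume :=
    hgi.bdd_mul (c := 1) (EE_cont t).aestronglyMeasurable (ae_of_all _ fun x => (EE_norm t x).le)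
  obtain ⟨h, hh, he⟩ := weak_id b0 b1 b2 b3 b4 m0 m1 m2 m3 m4 hFi
  have hlin : linBO t u₀ = 𝓕⁻ (fun x => EE t x * 𝓕 (V 0) x) := by
    rw [hV0]; rfl
  refine ⟨h, 2 * (-3 * (2 * I * t) * 𝓕 (V (0 + 1)) 0), (2 * π * I) ^ 4, ?_, ?_, hh, ?_, ?_⟩
  · have hg1 : 𝓕 (V 1) 0 = c * ((∫ x : ℝ, x * u₀ x : ℝ) : ℂ) := by
      rw [Real.fourier_eq', ← integral_complex_ofReal, ← integral_const_mul]
      congr 1; funext x; simp [V, hU]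
    simp only [zero_add]
    rw [hg1]
    have : ((∫ x : ℝ, x * u₀ x : ℝ) : ℂ) ≠ 0 := by exact_mod_cast hmom
    have ht' : (t : ℂ) ≠ 0 := by exact_mod_cast ht
    simp [ht', this, hc0]
  · simp [Real.pi_ne_zero]
  · rw [hlin]; exact ft_inv_cont hFi
  · rw [hlin]; exact he

end Final


/-- If `u₀ ∈ Ż_{5,4}` has nonzero first momentum, then for every
`t ≠ 0` the linear solution `W(t)u₀` belongs to `L²(|x|^{7-ε} dx)` for every
`ε ∈ (0,7]` but not to `L²(|x|⁷ dx)`. -/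
theorem linear_bo_sharp_weighted_decay (u₀ : ℝ → ℝ)
    (hu₀ : InZdot 5 4 u₀)
    (hmom : (∫ x : ℝ, x * u₀ x) ≠ 0) :
    ∀ t : ℝ, t ≠ 0 →
      (∀ ε : ℝ, ε ∈ Set.Ioc (0 : ℝ) 7 →
          Integrable (fun x : ℝ => |x| ^ (7 - ε) * ‖linBO t u₀ x‖ ^ 2) volume) ∧
        ¬ Integrable (fun x : ℝ => |x| ^ (7 : ℝ) * ‖linBO t u₀ x‖ ^ 2) volume := by
  intro t ht
  obtain ⟨h, c, b, hc, hb, hh, hv, he⟩ := main_aux u₀ hu₀ hmom t ht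
  exact ⟨fun ε hε => concl_pos hb hh hv he hε, concl_neg hc hb hh he⟩
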